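/- arXiv:2302.07262 — 8 statements merged into one kernel-verified Lean document; each statement's English description precedes it below -/
import Mathlib

section
/- Let (F_n) be the Fibonacci sequence. The only solutions of the Diophantine equation F_n - F_m = 13^a in non-negative integers (n, m, a) with n ≥ 2 and m < n are (n,m,a) ∈ {(2,0,0), (3,1,0), (3,2,0), (4,3,0), (7,0,1), (8,6,1), (9,8,1)}; that is, F_2 - F_0 = F_3 - F_1 = F_3 - F_2 = F_4 - F_3 = 13^0 and F_7 - F_0 = F_8 - F_6 = F_9 - F_8 = 13^1. -/
/-!
The proof is elementary: congruences alone rule out every exponent `a ≥ 2`.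

If `F n = F m + 13 ^ a` with `a ≥ 2`, then `F n ≡ F m` modulo `169`. For `p = 5, 11, 29, 71, 131,
521, 911` both the Pisano period of `p` and the order of `13` modulo `p` divide
`1820 = 28 * 5 * 13`, and the period of `169` is `364 = 28 * 13`. Hence the equation restricts
`(n, m, a)` modulo `1820`, and it turns out that no class modulo `1820` satisfies all the
congruences. The classes are searched by lifting along `28 ∣ 140 ∣ 1820`, discarding a class as soon
as one of the available moduli excludes it: `13, 29` at level `28`, then `5, 11, 71` at level `140`,
and `169, 131, 521, 911` at level `1820` (`no_class_mod_1820`).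

For `a ≤ 1` the inequality `F n - F m ≥ F (n - 2)` bounds `n` by `9`, and finitely many pairs remain.
-/

/-- If `T` is a period of the Fibonacci sequence modulo `p`, residues depend on the index mod `T`. -/
lemma fib_mod_period {p T : ℕ} (h0 : Nat.fib T ≡ 0 [MOD p]) (h1 : Nat.fib (T + 1) ≡ 1 [MOD p])
    (n : ℕ) : Nat.fib n ≡ Nat.fib (n % T) [MOD p] := by
  have hper : Function.Periodic (fun k => Nat.fib k % p) T := by
    intro k
    have h : Nat.fib (k + T) ≡ Nat.fib k [MOD p] := by
      rcases k with _ | k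
      · simpa using h0
      · have e : Nat.fib (k + 1 + T) =
            Nat.fib k * Nat.fib T + Nat.fib (k + 1) * Nat.fib (T + 1) := by
          rw [← Nat.fib_add]; congr 1; ring
        rw [e]
        simpa using (h0.mul_left (Nat.fib k)).add (h1.mul_left (Nat.fib (k + 1)))
    exact h
  exact (hper.map_mod_nat n).symm

lemma pow_mod_period {p o : ℕ} (h : 13 ^ o ≡ 1 [MOD p]) (a : ℕ) :
    13 ^ a ≡ 13 ^ (a % o) [MOD p] := by
  conv_lhs => rw [← Nat.div_add_mod a o, pow_add, pow_mul]
  simpa using (h.pow (a / o)).mul_right (13 ^ (a % o))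

/-- The equation `F x = F y + 13 ^ z` modulo `p`, with the indices of the Fibonacci numbers reduced
modulo `T` and the exponent reduced modulo `o`. -/
def EqMod (p T o x y z : ℕ) : Prop :=
  Nat.fib (x % T) % p = (Nat.fib (y % T) + 13 ^ (z % o)) % p

/-- The congruence `F x ≡ F y` modulo `p`, with indices reduced modulo `T`. -/
def FibEqMod (p T x y : ℕ) : Prop :=
  Nat.fib (x % T) % p = Nat.fib (y % T) % p

instance (p T o x y z : ℕ) : Decidable (EqMod p T o x y z) :=
  inferInstanceAs (Decidable (_ = _))

instance (p T x y : ℕ) : Decidable (FibEqMod p T x y) :=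
  inferInstanceAs (Decidable (_ = _))

lemma eqMod_of_eq {n m a : ℕ} (h : Nat.fib n = Nat.fib m + 13 ^ a) {p T o : ℕ}
    (h0 : Nat.fib T ≡ 0 [MOD p]) (h1 : Nat.fib (T + 1) ≡ 1 [MOD p]) (ho : 13 ^ o ≡ 1 [MOD p])
    {x y z : ℕ} (hx : x % T = n % T) (hy : y % T = m % T) (hz : z % o = a % o) :
    EqMod p T o x y z := by
  unfold EqMod
  rw [hx, hy, hz]
  have h2 := fib_mod_period h0 h1 n
  rw [h] at h2
  exact h2.symm.trans ((fib_mod_period h0 h1 m).add (pow_mod_period ho a))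

lemma fibEqMod_of_eq {n m a : ℕ} (h : Nat.fib n = Nat.fib m + 13 ^ a) {p T : ℕ}
    (h0 : Nat.fib T ≡ 0 [MOD p]) (h1 : Nat.fib (T + 1) ≡ 1 [MOD p]) (ha : p ∣ 13 ^ a)
    {x y : ℕ} (hx : x % T = n % T) (hy : y % T = m % T) :
    FibEqMod p T x y := by
  unfold FibEqMod
  rw [hx, hy]
  have h2 := fib_mod_period h0 h1 n
  rw [h] at h2
  have h3 := (fib_mod_period h0 h1 m).add (Nat.modEq_zero_iff_dvd.2 ha)
  exact h2.symm.trans h3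

/-- No triple modulo `1820` above the class `(x, y, z)` modulo `140` satisfies the congruences
available at level `1820`. -/
def NoLift1820 (x y z : ℕ) : Prop :=
  ∀ r < 13, ∀ s < 13, FibEqMod 169 364 (x + 140 * r) (y + 140 * s) →
    ∀ t < 13, ¬ (EqMod 131 130 65 (x + 140 * r) (y + 140 * s) (z + 140 * t) ∧
      EqMod 521 26 260 (x + 140 * r) (y + 140 * s) (z + 140 * t) ∧
      EqMod 911 70 455 (x + 140 * r) (y + 140 * s) (z + 140 * t))

instance (x y z : ℕ) : Decidable (NoLift1820 x y z) := by
  unfold NoLift1820; infer_instance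

/-- No triple modulo `1820` above the class `(x, y, z)` modulo `28` satisfies the congruences
available at the levels `140` and `1820`. -/
def NoLift140 (x y z : ℕ) : Prop :=
  ∀ i < 5, ∀ j < 5, ∀ k < 5, EqMod 5 20 4 (x + 28 * i) (y + 28 * j) (z + 28 * k) ∧
    EqMod 11 10 10 (x + 28 * i) (y + 28 * j) (z + 28 * k) ∧
    EqMod 71 70 70 (x + 28 * i) (y + 28 * j) (z + 28 * k) →
    NoLift1820 (x + 28 * i) (y + 28 * j) (z + 28 * k)

instance (x y z : ℕ) : Decidable (NoLift140 x y z) := by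
  unfold NoLift140; infer_instance

/-- No class modulo `1820` satisfies all the congruences. -/
lemma no_class_mod_1820 :
    ∀ x < 28, ∀ y < 28, FibEqMod 13 28 x y → ∀ z < 28, EqMod 29 14 14 x y z →
      NoLift140 x y z := by
  decide +kernel

lemma digits_140 (n : ℕ) : n % 28 + 28 * (n / 28 % 5) = n % 140 := by omega

lemma digits_1820 (n : ℕ) : n % 140 + 140 * (n / 140 % 13) = n % 1820 := by
  omega

lemma fib_ne_fib_add_pow {n m a : ℕ} (ha : 2 ≤ a) : Nat.fib n ≠ Nat.fib m + 13 ^ a := by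
  intro h
  have h169 : 169 ∣ 13 ^ a := pow_dvd_pow 13 ha
  have h13 : 13 ∣ 13 ^ a := dvd_trans (by norm_num) h169
  refine no_class_mod_1820 (n % 28) (by omega) (m % 28) (by omega) ?_ (a % 28) (by omega) ?_
    (n / 28 % 5) (by omega) (m / 28 % 5) (by omega) (a / 28 % 5) (by omega) ⟨?_, ?_, ?_⟩
    (n / 140 % 13) (by omega) (m / 140 % 13) (by omega) ?_ (a / 140 % 13) (by omega)
    ⟨?_, ?_, ?_⟩
  all_goals try simp only [digits_140, digits_1820]
  case refine_1 =>
    exact fibEqMod_of_eq h (by decide +kernel) (by decide +kernel) h13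
      (Nat.mod_mod_of_dvd _ (by norm_num)) (Nat.mod_mod_of_dvd _ (by norm_num))
  case refine_6 =>
    exact fibEqMod_of_eq h (by decide +kernel) (by decide +kernel) h169
      (Nat.mod_mod_of_dvd _ (by norm_num)) (Nat.mod_mod_of_dvd _ (by norm_num))
  all_goals
    exact eqMod_of_eq h (by decide +kernel) (by decide +kernel) (by decide +kernel)
      (Nat.mod_mod_of_dvd _ (by norm_num)) (Nat.mod_mod_of_dvd _ (by norm_num))
      (Nat.mod_mod_of_dvd _ (by norm_num))

/-- A positive gap `F n - F m` is at least `F (n - 2)`, so a gap of at most `13 < F 8` forces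
`n ≤ 9`. -/
lemma le_nine_of_fib_le {n m : ℕ} (hmn : m < n) (h : Nat.fib n ≤ Nat.fib m + 13) : n ≤ 9 := by
  by_contra! hn
  obtain ⟨k, rfl⟩ : ∃ k, n = k + 2 := ⟨n - 2, by omega⟩
  have h1 : Nat.fib m ≤ Nat.fib (k + 1) := Nat.fib_mono (by omega)
  have h2 : Nat.fib 8 ≤ Nat.fib k := Nat.fib_mono (by omega)
  have h3 : Nat.fib 8 = 21 := by decide
  have h4 := Nat.fib_add_two (n := k)
  omega

/-- The only solutions of the Diophantine equation `F_n - F_m = 13 ^ a` in non-negative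
integers `(n, m, a)` with `n ≥ 2` and `m < n` are
`(2,0,0), (3,1,0), (3,2,0), (4,3,0), (7,0,1), (8,6,1), (9,8,1)`. -/
theorem fib_sub_fib_eq_pow_thirteen (n m a : ℕ) (hn : 2 ≤ n) (hmn : m < n) :
    (Nat.fib n : ℤ) - Nat.fib m = 13 ^ a ↔
      (n, m, a) ∈ ({(2,0,0), (3,1,0), (3,2,0), (4,3,0), (7,0,1), (8,6,1), (9,8,1)} :
        Set (ℕ × ℕ × ℕ)) := by
  simp only [Set.mem_insert_iff, Set.mem_singleton_iff, Prod.mk.injEq]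
  constructor
  · intro h
    have h' : Nat.fib n = Nat.fib m + 13 ^ a := by
      zify; linarith
    have ha : a < 2 := by
      by_contra! ha
      exact fib_ne_fib_add_pow ha h'
    have hn9 : n ≤ 9 := le_nine_of_fib_le hmn (by interval_cases a <;> omega)
    clear h
    interval_cases a <;> interval_cases n <;> interval_cases m <;>
      simp [Nat.fib_add_two] at h' ⊢
  · rintro (⟨rfl, rfl, rfl⟩ | ⟨rfl, rfl, rfl⟩ | ⟨rfl, rfl, rfl⟩ | ⟨rfl, rfl, rfl⟩ |
      ⟨rfl, rfl, rfl⟩ | ⟨rfl, rfl, rfl⟩ | ⟨rfl, rfl, rfl⟩) <;> norm_num [Nat.fib_add_two]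
end

section
/- (Dujella–Pethő reduction lemma) Let M > 1 be a positive integer, let γ be an irrational real number, and let p/q be a convergent of the continued fraction expansion of γ with q > 6M. Let A, B, μ be real numbers with A > 0 and B > 1, and set ε := ‖μq‖ − M·‖γq‖, where ‖x‖ denotes the distance from the real number x to the nearest integer. If ε > 0, then there is no solution to the inequality 0 < |mγ − n + μ| < A·B^{−ω} in positive integers m, n, ω with m ≤ M and ω ≥ log(Aq/ε)/log B. -/
/-!
If `q` is an integer and `N` is an integer nearest to `γq`, then
`μq = q(mγ - n + μ) - m(γq - N) + (nq - mN)`, so that `‖μq‖ ≤ q|mγ - n + μ| + m‖γq‖`.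
With `m ≤ M` this gives `ε ≤ q|mγ - n + μ| < qA·B^{-ω}`, while `ω ≥ log(Aq/ε)/log B` says exactly
that `qA·B^{-ω} ≤ ε`, a contradiction. That `q` is an integer follows from the recurrence for the
denominators of convergents, whose coefficients are integers (`exists_int_dens_eq`).
-/


/-- The distance from a real number `x` to the nearest integer,
`‖x‖ = min {|x - n| : n ∈ ℤ}`. -/
noncomputable def distToNearestInt (x : ℝ) : ℝ := |x - round x|

/-- The recurrence is of second order, so two consecutive denominators are treated at once. -/
theorem exists_int_dens_eq_and_succ (γ : ℝ) (i : ℕ) :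
    (∃ z : ℤ, (GenContFract.of γ).dens i = z) ∧
      ∃ z : ℤ, (GenContFract.of γ).dens (i + 1) = z := by
  induction i with
  | zero =>
    refine ⟨⟨1, by simp⟩, ?_⟩
    cases h : (GenContFract.of γ).s.get? 0 with
    | none =>
      exact ⟨1, by rw [GenContFract.dens_stable_of_terminated (Nat.zero_le _) h]; simp⟩
    | some gp =>
      obtain ⟨-, z, hz⟩ := GenContFract.of_partNum_eq_one_and_exists_int_partDen_eq h
      exact ⟨z, by rw [GenContFract.first_den_eq h, hz]⟩
  | succ k ih =>
    obtain ⟨⟨a, ha⟩, b, hb⟩ := ih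
    refine ⟨⟨b, hb⟩, ?_⟩
    cases h : (GenContFract.of γ).s.get? (k + 1) with
    | none =>
      exact ⟨b, by rw [GenContFract.dens_stable_of_terminated (Nat.le_succ _) h, hb]⟩
    | some gp =>
      obtain ⟨h1, z, hz⟩ := GenContFract.of_partNum_eq_one_and_exists_int_partDen_eq h
      exact ⟨z * b + a, by
        rw [GenContFract.dens_recurrence h ha hb, h1, hz]; push_cast; ring⟩

theorem exists_int_dens_eq (γ : ℝ) (i : ℕ) : ∃ z : ℤ, (GenContFract.of γ).dens i = z :=
  (exists_int_dens_eq_and_succ γ i).1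

/-- The estimate `‖μq‖ ≤ q|mγ - n + μ| + m‖γq‖`. -/
theorem distToNearestInt_mul_le (γ μ : ℝ) (q : ℤ) (hq : 0 < (q : ℝ)) (m n : ℕ) :
    distToNearestInt (μ * q) ≤
      q * |(m : ℝ) * γ - n + μ| + m * distToNearestInt (γ * q) := by
  unfold distToNearestInt
  calc |μ * q - round (μ * q)|
      ≤ |μ * q - ((n * q - m * round (γ * q) : ℤ) : ℝ)| := round_le _ _
    _ = |q * ((m : ℝ) * γ - n + μ) - m * (γ * q - round (γ * q))| := by
        push_cast; congr 1; ring
    _ ≤ |q * ((m : ℝ) * γ - n + μ)| + |m * (γ * q - round (γ * q))| := abs_sub _ _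
    _ = _ := by rw [abs_mul, abs_mul, abs_of_pos hq, Nat.abs_cast]

/-- (Dujella–Pethő reduction lemma) Let `M > 1` be a positive integer, `γ` an irrational
real number, and `q` the denominator of a convergent `p/q` of the continued fraction
expansion of `γ` with `q > 6M`. Let `A > 0`, `B > 1`, `μ` be real numbers and set
`ε := ‖μq‖ - M‖γq‖`. If `ε > 0`, then there is no solution to
`0 < |mγ - n + μ| < A·B^{-ω}` in positive integers `m, n, ω` with `m ≤ M` and
`ω ≥ log(Aq/ε)/log B`. -/
theorem dujella_petho (M : ℕ) (hM : 1 < M) (γ : ℝ) (hγ : Irrational γ)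
    (i : ℕ) (p q : ℝ) (hp : p = (GenContFract.of γ).nums i)
    (hq : q = (GenContFract.of γ).dens i) (hq6 : 6 * (M : ℝ) < q)
    (A B μ : ℝ) (hA : 0 < A) (hB : 1 < B)
    (ε : ℝ) (hε : ε = distToNearestInt (μ * q) - M * distToNearestInt (γ * q))
    (hεpos : 0 < ε) :
    ¬ ∃ m n ω : ℕ, 0 < m ∧ 0 < n ∧ 0 < ω ∧ (m : ℝ) ≤ M ∧
      Real.log (A * q / ε) / Real.log B ≤ ω ∧
      0 < |(m : ℝ) * γ - n + μ| ∧ |(m : ℝ) * γ - n + μ| < A * B ^ (-(ω : ℤ)) := by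
  rintro ⟨m, n, ω, -, -, -, hmM, hω, -, hlt⟩
  have hq0 : 0 < q := lt_of_le_of_lt (by positivity) hq6
  have hle : ε ≤ q * |(m : ℝ) * γ - n + μ| := by
    obtain ⟨z, hz⟩ := exists_int_dens_eq γ i
    rw [← hq] at hz
    have h1 := distToNearestInt_mul_le γ μ z (hz ▸ hq0) m n
    rw [← hz] at h1
    have h2 : m * distToNearestInt (γ * q) ≤ M * distToNearestInt (γ * q) :=
      mul_le_mul_of_nonneg_right hmM (abs_nonneg _)
    linarith
  have hB0 : 0 < B := by linarith
  have hpow : A * q / ε ≤ B ^ ω := by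
    rw [div_le_iff₀ (Real.log_pos hB), ← Real.log_pow] at hω
    exact (Real.log_le_log_iff (by positivity) (by positivity)).1 hω
  rw [div_le_iff₀ hεpos] at hpow
  rw [zpow_neg, zpow_natCast, ← div_eq_mul_inv, lt_div_iff₀ (by positivity)] at hlt
  -- Multiplying the bounds by `B ^ ω` and by `q` gives `Aq ≤ εB^ω ≤ q|mγ - n + μ|B^ω < qA`.
  have h3 := mul_le_mul_of_nonneg_right hle (pow_pos hB0 ω).le
  have h4 := mul_lt_mul_of_pos_left hlt hq0
  linarith
end

section
/- Let α = (1+√5)/2. If n, m, a are non-negative integers with n > m ≥ 1 and F_n − F_m = 7^a, then |1 − 7^a · √5 · α^{−n}| < 4/α^{n−m}. -/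
/-!
Write `φ = α` and `ψ = (1 - √5) / 2`. By Binet's formula for both `F_n` and `F_m`,
`√5 * 7 ^ a = φ ^ n - ψ ^ n - (φ ^ m - ψ ^ m)`, so the quantity inside the absolute value is
`(φ ^ m + ψ ^ n - ψ ^ m) / φ ^ n`. As `|ψ| < 1 < φ`, its numerator is smaller than `4 * φ ^ m`
in absolute value.
-/

open Real goldenRatio in
/-- If `n > m ≥ 1` and `F_n - F_m = 7 ^ a`, then
`|1 - 7^a · √5 · α^{-n}| < 4 / α^{n-m}`, where `α` is the golden ratio. -/
theorem abs_one_sub_pow_seven_lt (n m a : ℕ) (hm : 1 ≤ m) (hmn : m < n)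
    (h : (Nat.fib n : ℤ) - Nat.fib m = 7 ^ a) :
    |1 - (7 : ℝ) ^ a * Real.sqrt 5 * ((1 + Real.sqrt 5) / 2) ^ (-(n : ℤ))| <
      4 / ((1 + Real.sqrt 5) / 2) ^ (n - m) := by
  change |1 - (7 : ℝ) ^ a * √5 * φ ^ (-(n : ℤ))| < 4 / φ ^ (n - m)
  have h7 : (Nat.fib n : ℝ) - Nat.fib m = 7 ^ a := by exact_mod_cast h
  have h5 : √5 ≠ 0 := by positivity
  have hφn : 0 < φ ^ n := pow_pos goldenRatio_pos n
  have hφm : 1 ≤ φ ^ m := one_le_pow₀ one_lt_goldenRatio.le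
  have hψ (k : ℕ) : |ψ ^ k| ≤ 1 := by
    rw [abs_pow]
    exact pow_le_one₀ (abs_nonneg _)
      (abs_le.2 ⟨neg_one_lt_goldenConj.le, goldenConj_neg.le.trans zero_le_one⟩)
  -- Binet's formula, applied to both Fibonacci numbers
  have key : (7 : ℝ) ^ a * √5 = φ ^ n - ψ ^ n - (φ ^ m - ψ ^ m) := by
    rw [← h7, coe_fib_eq, coe_fib_eq]
    field_simp
  have hL : 1 - (7 : ℝ) ^ a * √5 * φ ^ (-(n : ℤ)) = (φ ^ m + ψ ^ n - ψ ^ m) / φ ^ n := by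
    rw [key, zpow_neg, zpow_natCast]
    field_simp
    ring
  have hR : 4 / φ ^ (n - m) = 4 * φ ^ m / φ ^ n := by
    rw [← pow_sub_mul_pow φ hmn.le, mul_div_mul_right _ _ (by positivity)]
  rw [hL, hR, abs_div, abs_of_pos hφn]
  gcongr
  -- the conjugate terms contribute at most `2 < 3 * φ ^ m`
  have h₁ := abs_le.1 (hψ n)
  have h₂ := abs_le.1 (hψ m)
  rw [abs_lt]
  constructor <;> linarith
end

section
/- Let α = (1+√5)/2. If n, m, a are non-negative integers with n > 200, m ≥ 1, n − m ≥ 3, and F_n − F_m = 7^a, then |1 − 7^a · α^{−n} · √5 · (1 − α^{m−n})^{−1}| < √5/α^n < 3/α^n. -/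
/-! By Binet's formula, `7 ^ a * √5 = (φ ^ n - φ ^ m) - (ψ ^ n - ψ ^ m)`, where `ψ = -φ⁻¹` is the
conjugate of the golden ratio `φ`. Since `φ ^ n * (1 - φ ^ (m - n)) = φ ^ n - φ ^ m`, the quantity in
absolute value equals `(ψ ^ n - ψ ^ m) / (φ ^ n * (1 - φ ^ (m - n)))`, so the first inequality says
`|ψ ^ n - ψ ^ m| < √5 * (1 - φ ^ (m - n))`. As `n - m ≥ 3` and `φ⁻¹ ^ 3 = √5 - 2 < 1 / 4`, the left
side is below `1 + 1 / 4` and the right side is above `2 * (3 / 4)`. -/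

open Real in
theorem inv_goldenRatio_pow_lt {k : ℕ} (hk : 3 ≤ k) : (goldenRatio⁻¹) ^ k < 1 / 4 := by
  have h0 : (0 : ℝ) ≤ goldenRatio⁻¹ := inv_nonneg.2 goldenRatio_pos.le
  have h1 : goldenRatio⁻¹ ≤ 1 := inv_le_one_of_one_le₀ one_lt_goldenRatio.le
  refine (pow_le_pow_of_le_one h0 h1 hk).trans_lt ?_
  have h5 : √5 ^ 2 = 5 := Real.sq_sqrt (by norm_num)
  have h5' : √5 < 9 / 4 := by rw [Real.sqrt_lt' (by norm_num)]; norm_num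
  have h3 : (goldenRatio⁻¹) ^ 3 = √5 - 2 := by
    rw [inv_goldenRatio, goldenConj]
    linear_combination (1 / 8 * √5 - 3 / 8) * h5
  rw [h3]
  linarith

theorem abs_one_sub_pow_seven_second_form (n m a : ℕ) (hn : 200 < n) (hm : 1 ≤ m)
    (hnm : 3 ≤ n - m) (h : (Nat.fib n : ℤ) - Nat.fib m = 7 ^ a) :
    |1 - (7 : ℝ) ^ a * ((1 + Real.sqrt 5) / 2) ^ (-(n : ℤ)) * Real.sqrt 5 *
        (1 - ((1 + Real.sqrt 5) / 2) ^ ((m : ℤ) - n))⁻¹| <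
      Real.sqrt 5 / ((1 + Real.sqrt 5) / 2) ^ n ∧
    Real.sqrt 5 / ((1 + Real.sqrt 5) / 2) ^ n < 3 / ((1 + Real.sqrt 5) / 2) ^ n := by
  change |1 - (7 : ℝ) ^ a * Real.goldenRatio ^ (-(n : ℤ)) * Real.sqrt 5 *
        (1 - Real.goldenRatio ^ ((m : ℤ) - n))⁻¹| < Real.sqrt 5 / Real.goldenRatio ^ n ∧
    Real.sqrt 5 / Real.goldenRatio ^ n < 3 / Real.goldenRatio ^ n
  have hpos : 0 < Real.goldenRatio ^ n := pow_pos Real.goldenRatio_pos n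
  have h5 : 2 < Real.sqrt 5 := by rw [Real.lt_sqrt (by norm_num)]; norm_num
  have h5' : Real.sqrt 5 < 3 := by rw [Real.sqrt_lt' (by norm_num)]; norm_num
  refine ⟨?_, by gcongr⟩
  obtain ⟨k, rfl⟩ : ∃ k, n = m + k := ⟨n - m, by omega⟩
  have hk := inv_goldenRatio_pow_lt (k := k) (by omega)
  have hmk := inv_goldenRatio_pow_lt (k := m + k) (by omega)
  have hzpow : Real.goldenRatio ^ ((m : ℤ) - (m + k : ℕ)) = Real.goldenRatio⁻¹ ^ k := by
    rw [show (m : ℤ) - (m + k : ℕ) = -(k : ℤ) by push_cast; ring, zpow_neg, zpow_natCast, inv_pow]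
  have hR : (Nat.fib (m + k) : ℝ) - Nat.fib m = 7 ^ a := by exact_mod_cast h
  have hbinet : (7 : ℝ) ^ a * Real.sqrt 5 = Real.goldenRatio ^ (m + k) *
      (1 - Real.goldenRatio⁻¹ ^ k) - (Real.goldenConj ^ (m + k) - Real.goldenConj ^ m) := by
    have hφ : Real.goldenRatio ^ (m + k) * Real.goldenRatio⁻¹ ^ k = Real.goldenRatio ^ m := by
      rw [pow_add, mul_assoc, ← mul_pow, mul_inv_cancel₀ Real.goldenRatio_ne_zero, one_pow, mul_one]
    rw [mul_sub, hφ, ← hR, Real.coe_fib_eq, Real.coe_fib_eq]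
    field_simp
    ring
  have hψ : |Real.goldenConj| = Real.goldenRatio⁻¹ := by
    rw [Real.inv_goldenRatio, abs_of_neg Real.goldenConj_neg]
  have hψm : |Real.goldenConj ^ m| ≤ 1 := by
    rw [abs_pow, hψ]
    exact pow_le_one₀ (inv_nonneg.2 Real.goldenRatio_pos.le)
      (inv_le_one_of_one_le₀ Real.one_lt_goldenRatio.le)
  have hψn : |Real.goldenConj ^ (m + k)| < 1 / 4 := by rwa [abs_pow, hψ]
  have hnum := abs_sub (Real.goldenConj ^ (m + k)) (Real.goldenConj ^ m)
  have hd : 0 < 1 - Real.goldenRatio⁻¹ ^ k := by linarith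
  rw [hzpow, zpow_neg, zpow_natCast]
  have hexpr : 1 - (7 : ℝ) ^ a * (Real.goldenRatio ^ (m + k))⁻¹ * Real.sqrt 5 *
      (1 - Real.goldenRatio⁻¹ ^ k)⁻¹ = (Real.goldenConj ^ (m + k) - Real.goldenConj ^ m) /
        (1 - Real.goldenRatio⁻¹ ^ k) / Real.goldenRatio ^ (m + k) := by
    generalize 1 - Real.goldenRatio⁻¹ ^ k = d at *
    generalize Real.goldenRatio ^ (m + k) = p at *
    have := hpos.ne'
    have := hd.ne'
    field_simp
    linear_combination -hbinet
  rw [hexpr, abs_div, abs_div, abs_of_pos hpos, abs_of_pos hd]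
  gcongr
  rw [div_lt_iff₀ hd]
  nlinarith
end

section
/- Let α = (1+√5)/2. If n, m, a are non-negative integers with n > m ≥ 1 and F_n − F_m = 13^a, then |1 − 13^a · √5 · α^{−n}| < 4/α^{n−m}. -/
/-! By Binet's formula, `√5 * 13 ^ a = φ ^ n - ψ ^ n - (φ ^ m - ψ ^ m)`, so the quantity inside the
absolute value is `(ψ ^ n + φ ^ m - ψ ^ m) / φ ^ n`. Since `|ψ| ≤ 1 ≤ φ`, the numerator is at most
`φ ^ m + 2 < 4 * φ ^ m` in absolute value. -/

/-- If `n > m ≥ 1` and `F_n - F_m = 13 ^ a`, then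
`|1 - 13^a · √5 · α^{-n}| < 4 / α^{n-m}`, where `α` is the golden ratio. -/
theorem abs_one_sub_pow_thirteen_lt (n m a : ℕ) (hm : 1 ≤ m) (hmn : m < n)
    (h : (Nat.fib n : ℤ) - Nat.fib m = 13 ^ a) :
    |1 - (13 : ℝ) ^ a * Real.sqrt 5 * ((1 + Real.sqrt 5) / 2) ^ (-(n : ℤ))| <
      4 / ((1 + Real.sqrt 5) / 2) ^ (n - m) := by
  change |1 - (13 : ℝ) ^ a * Real.sqrt 5 * Real.goldenRatio ^ (-(n : ℤ))| <
      4 / Real.goldenRatio ^ (n - m)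
  have hr : (Nat.fib n : ℝ) - Nat.fib m = 13 ^ a := by exact_mod_cast h
  have h5 : Real.sqrt 5 ≠ 0 := by positivity
  have binet : (13 : ℝ) ^ a * Real.sqrt 5 = Real.goldenRatio ^ n - Real.goldenConj ^ n
      - (Real.goldenRatio ^ m - Real.goldenConj ^ m) := by
    rw [← hr, Real.coe_fib_eq, Real.coe_fib_eq]
    field_simp
  have hpos : ∀ k : ℕ, 0 < Real.goldenRatio ^ k := fun k => pow_pos Real.goldenRatio_pos k
  have hψ : ∀ k : ℕ, |Real.goldenConj ^ k| ≤ 1 := fun k => by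
    rw [abs_pow]
    exact pow_le_one₀ (abs_nonneg _)
      (abs_le.2 ⟨Real.neg_one_lt_goldenConj.le, by linarith [Real.goldenConj_neg]⟩)
  have hφ : 1 ≤ Real.goldenRatio ^ m := one_le_pow₀ Real.one_lt_goldenRatio.le
  have hl : 1 - (13 : ℝ) ^ a * Real.sqrt 5 * Real.goldenRatio ^ (-(n : ℤ)) =
      (Real.goldenConj ^ n + Real.goldenRatio ^ m - Real.goldenConj ^ m)
        / Real.goldenRatio ^ n := by
    have := (hpos n).ne'
    rw [binet, zpow_neg, zpow_natCast]
    field_simp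
    ring
  have hrhs : 4 / Real.goldenRatio ^ (n - m) =
      4 * Real.goldenRatio ^ m / Real.goldenRatio ^ n := by
    rw [div_eq_div_iff (hpos _).ne' (hpos _).ne', mul_assoc, ← pow_add,
      Nat.add_sub_cancel' hmn.le]
  rw [hl, hrhs, abs_div, abs_of_pos (hpos n)]
  refine div_lt_div_of_pos_right ?_ (hpos n)
  have h1 := abs_le.1 (hψ n)
  have h2 := abs_le.1 (hψ m)
  rw [abs_lt]
  constructor <;> linarith [h1.1, h1.2, h2.1, h2.2]
end

section
/- Let α = (1+√5)/2. If n, m, a are non-negative integers with n > 200, m ≥ 1, n − m ≥ 3, and F_n − F_m = 13^a, then |1 − 13^a · α^{−n} · √5 · (1 − α^{m−n})^{−1}| < √5/α^n < 3/α^n. -/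
/-!
Write `φ` for the golden ratio and `ψ = (1 - √5) / 2` for its conjugate. By Binet's formula,
`√5 · 13 ^ a = (φ ^ n - φ ^ m) - (ψ ^ n - ψ ^ m)`, while
`φ ^ (-n) · (1 - φ ^ (m - n))⁻¹ = (φ ^ n - φ ^ m)⁻¹`. Hence the quantity inside the absolute value
is exactly `(ψ ^ n - ψ ^ m) / (φ ^ n - φ ^ m)`. Since `n - m ≥ 3` and `φ ^ 3 = 2 φ + 1 > 4`, the
denominator is at least `(3 / 4) φ ^ n`, and since `|ψ| < 5 / 8` the numerator is at most `5 / 4`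
in absolute value. The claim follows from `5 / 4 < (3 / 4) √5`.
-/

open Real in
lemma abs_goldenConj_pow_le {n : ℕ} (hn : n ≠ 0) : |goldenConj ^ n| ≤ 5 / 8 := by
  have h5 : √5 < 9 / 4 := by
    rw [Real.sqrt_lt' (by norm_num)]; norm_num
  have hψ : |goldenConj| ≤ 5 / 8 := by
    rw [abs_of_neg goldenConj_neg, goldenConj]; linarith
  rw [abs_pow]
  exact (pow_le_of_le_one (abs_nonneg _) (by linarith) hn).trans hψ

open Real in
lemma four_mul_goldenRatio_pow_le {m n : ℕ} (h : m + 3 ≤ n) :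
    4 * goldenRatio ^ m ≤ goldenRatio ^ n := by
  have h5 : 2 < √5 := by
    rw [Real.lt_sqrt (by norm_num)]; norm_num
  have hφ : 3 / 2 < goldenRatio := by rw [goldenRatio]; linarith
  have hcube : 4 ≤ goldenRatio ^ 3 := by
    have : goldenRatio ^ 3 = 2 * goldenRatio + 1 := by
      linear_combination (goldenRatio + 1) * goldenRatio_sq
    linarith
  calc 4 * goldenRatio ^ m ≤ goldenRatio ^ 3 * goldenRatio ^ m := by
        have := goldenRatio_pos
        gcongr
    _ = goldenRatio ^ (m + 3) := by ring
    _ ≤ goldenRatio ^ n := pow_le_pow_right₀ one_lt_goldenRatio.le h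

/-- If `n > 200`, `m ≥ 1`, `n - m ≥ 3` and `F_n - F_m = 13 ^ a`, then
`|1 - 13^a · α^{-n} · √5 · (1 - α^{m-n})^{-1}| < √5/α^n < 3/α^n`,
where `α` is the golden ratio. -/
theorem abs_one_sub_pow_thirteen_second_form (n m a : ℕ) (hn : 200 < n) (hm : 1 ≤ m)
    (hnm : 3 ≤ n - m) (h : (Nat.fib n : ℤ) - Nat.fib m = 13 ^ a) :
    |1 - (13 : ℝ) ^ a * ((1 + Real.sqrt 5) / 2) ^ (-(n : ℤ)) * Real.sqrt 5 *
        (1 - ((1 + Real.sqrt 5) / 2) ^ ((m : ℤ) - n))⁻¹| <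
      Real.sqrt 5 / ((1 + Real.sqrt 5) / 2) ^ n ∧
    Real.sqrt 5 / ((1 + Real.sqrt 5) / 2) ^ n < 3 / ((1 + Real.sqrt 5) / 2) ^ n := by
  change |1 - (13 : ℝ) ^ a * Real.goldenRatio ^ (-(n : ℤ)) * √5 *
        (1 - Real.goldenRatio ^ ((m : ℤ) - n))⁻¹| < √5 / Real.goldenRatio ^ n ∧
    √5 / Real.goldenRatio ^ n < 3 / Real.goldenRatio ^ n
  have hφn : 0 < Real.goldenRatio ^ n := pow_pos Real.goldenRatio_pos n
  have hφm : 0 < Real.goldenRatio ^ m := pow_pos Real.goldenRatio_pos m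
  have h5 : 2 < √5 := by
    rw [Real.lt_sqrt (by norm_num)]; norm_num
  have h5' : √5 < 3 := by
    rw [Real.sqrt_lt' (by norm_num)]; norm_num
  refine ⟨?_, by gcongr⟩
  have h4 := four_mul_goldenRatio_pow_le (m := m) (n := n) (by omega)
  have hD : 0 < Real.goldenRatio ^ n - Real.goldenRatio ^ m := by linarith
  have hbinet : (13 : ℝ) ^ a * √5 = (Real.goldenRatio ^ n - Real.goldenRatio ^ m) -
      (Real.goldenConj ^ n - Real.goldenConj ^ m) := by
    have h' : (Nat.fib n : ℝ) - Nat.fib m = 13 ^ a := by exact_mod_cast h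
    rw [← h', Real.coe_fib_eq, Real.coe_fib_eq]
    field_simp
    ring
  have hinv : Real.goldenRatio ^ (-(n : ℤ)) * (1 - Real.goldenRatio ^ ((m : ℤ) - n))⁻¹ =
      (Real.goldenRatio ^ n - Real.goldenRatio ^ m)⁻¹ := by
    rw [zpow_sub₀ Real.goldenRatio_ne_zero, zpow_neg, zpow_natCast, zpow_natCast, ← mul_inv,
      mul_sub, mul_one, mul_div_cancel₀ _ hφn.ne']
  have hexpr : 1 - (13 : ℝ) ^ a * Real.goldenRatio ^ (-(n : ℤ)) * √5 *
        (1 - Real.goldenRatio ^ ((m : ℤ) - n))⁻¹ =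
      (Real.goldenConj ^ n - Real.goldenConj ^ m) /
        (Real.goldenRatio ^ n - Real.goldenRatio ^ m) := by
    rw [mul_right_comm _ _ (√5), mul_assoc _ _ (_⁻¹), hinv, hbinet]
    field_simp
    ring
  have hnum : |Real.goldenConj ^ n - Real.goldenConj ^ m| ≤ 5 / 4 := by
    have h1 := abs_goldenConj_pow_le (n := n) (by omega)
    have h2 := abs_goldenConj_pow_le (n := m) (by omega)
    have h3 := abs_sub (Real.goldenConj ^ n) (Real.goldenConj ^ m)
    linarith
  rw [hexpr, abs_div, abs_of_pos hD, div_lt_div_iff₀ hD hφn]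
  calc |Real.goldenConj ^ n - Real.goldenConj ^ m| * Real.goldenRatio ^ n
      ≤ 5 / 4 * Real.goldenRatio ^ n := by gcongr
    _ < 2 * (3 / 4 * Real.goldenRatio ^ n) := by linarith
    _ ≤ √5 * (Real.goldenRatio ^ n - Real.goldenRatio ^ m) := by
        gcongr
        linarith
end

section
/- The only solutions of L_k = 7^a in non-negative integers k, a are (k, a) = (1, 0) and (k, a) = (4, 1); in particular, L_k = 7^a has no solution with a ≥ 2. -/
/-!
`L_28 = 49 * 14503`, and `49 ∣ L_n` only when `n` is an odd multiple of `28`, in which case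
`L_28 ∣ L_n`. Hence every Lucas number divisible by `49` is also divisible by `14503`, which is
prime to `7`; so no power `7 ^ a` with `a ≥ 2` is a
Lucas number. The implication `49 ∣ L_n → 14503 ∣ L_n` follows from
`L_{n+56} + L_n = L_28 * L_{n+28}` (`lucas_add_fifty_six`), which shows that both divisibilities
depend only on `n` modulo `56`, and a check of the indices below `56`. The exponents `a = 0, 1`
are settled by the bound `k ≤ L_k`.
-/

/-- The Lucas sequence: `L_0 = 2`, `L_1 = 1`, `L_{n+2} = L_{n+1} + L_n`. -/
def lucas : ℕ → ℕ
  | 0 => 2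
  | 1 => 1
  | n + 2 => lucas (n + 1) + lucas n

theorem lucas_add_two (n : ℕ) : lucas (n + 2) = lucas (n + 1) + lucas n := rfl

/-- The case `m = 28` of `L_{n+2m} + (-1)^m * L_n = L_m * L_{n+m}`, with `L_28 = 710647`. -/
theorem lucas_add_fifty_six (n : ℕ) :
    lucas (n + 56) + lucas n = 710647 * lucas (n + 28) := by
  induction n using Nat.twoStepInduction with
  | zero => decide +kernel
  | one => decide +kernel
  | more n h0 h1 =>
    have e1 : lucas (n + 2 + 56) = lucas (n + 1 + 56) + lucas (n + 56) := lucas_add_two (n + 56)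
    have e2 : lucas (n + 2 + 28) = lucas (n + 1 + 28) + lucas (n + 28) := lucas_add_two (n + 28)
    have e3 := lucas_add_two n
    lia

theorem dvd_lucas_of_forty_nine_dvd (n : ℕ) : 49 ∣ lucas n → 14503 ∣ lucas n := by
  induction n using Nat.strong_induction_on with
  | _ n ih =>
    by_cases hn : n < 56
    · have base : ∀ r < 56, 49 ∣ lucas r → 14503 ∣ lucas r := by decide +kernel
      exact base n hn
    · obtain ⟨m, rfl⟩ := Nat.exists_eq_add_of_le' (not_lt.mp hn)
      have h := lucas_add_fifty_six m
      have hm := ih m (by lia)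
      intro h49
      have h49m : 49 ∣ lucas m :=
        (Nat.dvd_add_right h49).mp (h ▸ Dvd.dvd.mul_right (by norm_num) _)
      exact (Nat.dvd_add_left (hm h49m)).mp (h ▸ Dvd.dvd.mul_right (by norm_num) _)

/-- The bound `n ≤ L_n`, with the next bound and positivity to carry the induction. -/
theorem le_lucas (n : ℕ) : n ≤ lucas n ∧ n + 1 ≤ lucas (n + 1) ∧ 1 ≤ lucas n := by
  induction n with
  | zero => decide
  | succ n ih =>
    have e := lucas_add_two n
    lia

theorem lt_two_of_lucas_eq (k a : ℕ) (h : lucas k = 7 ^ a) : a < 2 := by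
  by_contra! ha
  have h49 : 49 ∣ lucas k := h ▸ pow_dvd_pow 7 ha
  have hd : 14503 ∣ 7 ^ a := h ▸ dvd_lucas_of_forty_nine_dvd k h49
  have hc : Nat.Coprime 14503 (7 ^ a) := Nat.Coprime.pow_right a (by norm_num)
  have := Nat.Coprime.eq_one_of_dvd hc hd
  lia

/-- The only solutions of `L_k = 7^a` in non-negative integers `k, a` are
`(k, a) = (1, 0)` and `(k, a) = (4, 1)`; in particular there is no solution
with `a ≥ 2`. -/
theorem lucas_eq_pow_seven (k a : ℕ) :
    (lucas k = 7 ^ a ↔ (k, a) = (1, 0) ∨ (k, a) = (4, 1)) ∧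
      (lucas k = 7 ^ a → a < 2) := by
  refine ⟨⟨fun h => ?_, ?_⟩, lt_two_of_lucas_eq k a⟩
  · have ha := lt_two_of_lucas_eq k a h
    have hk := (le_lucas k).1
    have hk7 : k ≤ 7 := by
      interval_cases a <;> lia
    interval_cases a <;> interval_cases k <;> simp_all [lucas]
  · simp only [Prod.mk.injEq]
    rintro (⟨rfl, rfl⟩ | ⟨rfl, rfl⟩) <;> rfl
end

section
/- The only solution of L_k = 13^a in non-negative integers k, a is (k, a) = (1, 0); in particular, L_k = 13^a has no solution with a ≥ 1. -/
theorem lucas_add_seven (n : ℕ) : lucas (n + 7) = 13 * lucas (n + 1) + 8 * lucas n := by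
  simp only [lucas]
  ring

theorem not_thirteen_dvd_lucas (n : ℕ) : ¬ 13 ∣ lucas n := by
  induction n using Nat.strong_induction_on with
  | _ n ih =>
    by_cases h : n < 7
    · interval_cases n <;> simp [lucas]
    · obtain ⟨m, rfl⟩ : ∃ m, n = m + 7 := ⟨n - 7, by omega⟩
      have h1 := ih m (by omega)
      rw [lucas_add_seven]
      omega

theorem lucas_pos (n : ℕ) : 0 < lucas n := by
  have := not_thirteen_dvd_lucas n
  omega

theorem lucas_eq_one_iff (n : ℕ) : lucas n = 1 ↔ n = 1 := by
  match n with
  | 0 => simp [lucas]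
  | 1 => simp [lucas]
  | n + 2 =>
    have h1 := lucas_pos n
    have h2 := lucas_pos (n + 1)
    simp only [lucas]
    omega

/-- The only solution of `L_k = 13^a` in non-negative integers `k, a` is
`(k, a) = (1, 0)`; in particular there is no solution with `a ≥ 1`. -/
theorem lucas_eq_pow_thirteen (k a : ℕ) :
    (lucas k = 13 ^ a ↔ (k, a) = (1, 0)) ∧ (lucas k = 13 ^ a → a < 1) := by
  have ha : lucas k = 13 ^ a → a = 0 := by
    intro h
    by_contra h0
    exact not_thirteen_dvd_lucas k (h ▸ dvd_pow_self 13 h0)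
  refine ⟨⟨fun h => ?_, fun h => ?_⟩, fun h => by simp [ha h]⟩
  · obtain rfl := ha h
    rw [pow_zero, lucas_eq_one_iff] at h
    rw [h]
  · obtain ⟨rfl, rfl⟩ := Prod.mk.inj h
    simp [lucas]
end
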